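/- (Sufficiency of the linearizability conditions.) Let W ⊆ ℝ² be open, let A, B, C, D : W → ℝ be real-analytic functions satisfying D_y − C_x = 2(BD − C²), C_y − B_x = AD − BC, and B_y − A_x = 2(AC − B²) on W, and let f : W × ℝ → ℝ be defined by f(x,y,p) = A(x,y)p³ + 3B(x,y)p² + 3C(x,y)p + D(x,y). Then for every point (x₀, y₀) ∈ W there exist an open neighborhood U₀ ⊆ W of (x₀, y₀) and real-analytic functions χ, φ : U₀ → ℝ with χ_x φ_y − χ_y φ_x ≡ 1 on U₀, such that for every open interval I and every twice differentiable solution c : I → ℝ of c''(x) = f(x, c(x), c'(x)) with (x, c(x)) ∈ U₀ for all x ∈ I, there exist (a, b, k) ∈ ℝ³ with (a, b) ≠ (0,0) satisfying a·χ(x, c(x)) + b·φ(x, c(x)) = k for all x ∈ I. -/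

import Mathlib

/-- Partial derivative with respect to the first variable of a function on `ℝ²`. -/
noncomputable def pdx (g : ℝ × ℝ → ℝ) (z : ℝ × ℝ) : ℝ := fderiv ℝ g z (1, 0)

/-- Partial derivative with respect to the second variable of a function on `ℝ²`. -/
noncomputable def pdy (g : ℝ × ℝ → ℝ) (z : ℝ × ℝ) : ℝ := fderiv ℝ g z (0, 1)

/-! The graphs of solutions are the unparametrized geodesics of a torsion-free, trace-free
connection `Γ` on the plane, linear in `(A, B, C, D)`, and the three differential equations say that
`Γ` is flat. Over a flat torsion-free connection, parallel coframes exist and are closed; their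
primitives are affine coordinates `Ψ`, and since `Γ` is trace-free the Jacobian of `Ψ` is constant.
In these coordinates the velocity `g` of a solution satisfies `g' = r g`, so that its direction is
constant and the solution runs along a line.

An analytic parallel section with prescribed value at a point is obtained by solving the equation
along rays, where it becomes a Volterra equation on `C([0, 1], G)` whose coefficient depends
analytically on the endpoint; its solution does too, because inversion of operators is analytic.
Flatness gives the covariant derivative `Q` of this radially parallel section a linear equation
along rays with zero initial value, so `Q = 0`. -/

open Filter Set Topology

section Superposition

theorem update_continuousMap_apply {ι K E : Type*} [DecidableEq ι] [TopologicalSpace K]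
    [TopologicalSpace E] (g : ι → C(K, E)) (i : ι) (u : C(K, E)) (s : K) :
    (fun j => Function.update g i u j s) = Function.update (fun j => g j s) i (u s) :=
  Function.comp_update (fun v : C(K, E) => v s) g i u

variable {𝕜 K E F G : Type*} [NontriviallyNormedField 𝕜] [TopologicalSpace K] [CompactSpace K]
  [NormedAddCommGroup E] [NormedSpace 𝕜 E] [NormedAddCommGroup F] [NormedSpace 𝕜 F]
  [NormedAddCommGroup G] [NormedSpace 𝕜 G]

/-- The multilinear map `C(K, E)ⁿ → C(K, F)` obtained by applying `p` pointwise; these are the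
Taylor coefficients of superposition operators. -/
noncomputable def pointwiseMultilinear {n : ℕ} (p : E [×n]→L[𝕜] F) :
    C(K, E) [×n]→L[𝕜] C(K, F) :=
  MultilinearMap.mkContinuous
    { toFun := fun g => ⟨fun s => p fun i => g i s, by fun_prop⟩
      map_update_add' := fun g i x y => by
        ext s
        simp [update_continuousMap_apply]
      map_update_smul' := fun g i c x => by
        ext s
        simp [update_continuousMap_apply] }
    ‖p‖ fun g => by
      refine (ContinuousMap.norm_le _ (by positivity)).2 fun s => (p.le_opNorm _).trans ?_
      gcongr with i
      exact (g i).norm_coe_le_norm s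

theorem norm_pointwiseMultilinear_le {n : ℕ} (p : E [×n]→L[𝕜] F) :
    ‖(pointwiseMultilinear p : C(K, E) [×n]→L[𝕜] C(K, F))‖ ≤ ‖p‖ :=
  MultilinearMap.mkContinuous_norm_le _ (norm_nonneg p) _

theorem exists_analyticAt_superposition [CompleteSpace F] {f : E → F} {a : E}
    (hf : AnalyticAt 𝕜 f a) :
    ∃ Φ : C(K, E) → C(K, F), AnalyticAt 𝕜 Φ (ContinuousMap.const K a) ∧
      ∀ᶠ g in 𝓝 (ContinuousMap.const K a), ∀ s, Φ g s = f (g s) := by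
  obtain ⟨p, r, hp⟩ := hf
  let q : FormalMultilinearSeries 𝕜 C(K, E) C(K, F) := fun n => pointwiseMultilinear (p n)
  have hradius : r ≤ q.radius := hp.r_le.trans <|
    FormalMultilinearSeries.radius_le_of_le fun n => norm_pointwiseMultilinear_le (p n)
  have hq : HasFPowerSeriesOnBall (fun g => q.sum (g - ContinuousMap.const K a)) q
      (ContinuousMap.const K a) q.radius := by
    simpa using (q.hasFPowerSeriesOnBall (hp.r_pos.trans_le hradius)).comp_sub
      (ContinuousMap.const K a)
  refine ⟨_, hq.analyticAt, ?_⟩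
  filter_upwards [Metric.eball_mem_nhds _ hp.r_pos] with g hg s
  have hgs : g s ∈ Metric.eball a r := by
    rw [Metric.mem_eball, edist_eq_enorm_sub] at hg ⊢
    exact (enorm_le_iff_norm_le.2 ((g - ContinuousMap.const K a).norm_coe_le_norm s)).trans_lt hg
  have hsum := (ContinuousMap.evalCLM 𝕜 s : C(K, F) →L[𝕜] F).hasSum
    (hq.hasSum_sub (Metric.eball_subset_eball hradius hg))
  exact hsum.unique (hp.hasSum_sub hgs)

/-- The bilinear map `C(K, E) × C(K, F) → C(K, G)` obtained by applying `β` pointwise. -/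
noncomputable def pointwiseBilinear (β : E →L[𝕜] F →L[𝕜] G) :
    C(K, E) →L[𝕜] C(K, F) →L[𝕜] C(K, G) :=
  LinearMap.mkContinuous₂
    (LinearMap.mk₂ 𝕜 (fun f g => (⟨fun s => β (f s) (g s), by fun_prop⟩ : C(K, G)))
      (fun f f' g => by ext s; simp) (fun c f g => by ext s; simp)
      (fun f g g' => by ext s; simp) (fun c f g => by ext s; simp))
    ‖β‖ fun f g => by
      refine (ContinuousMap.norm_le _ (by positivity)).2 fun s => (β.le_opNorm₂ _ _).trans ?_
      gcongr
      · exact f.norm_coe_le_norm s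
      · exact g.norm_coe_le_norm s

theorem pointwiseBilinear_apply (β : E →L[𝕜] F →L[𝕜] G) (f : C(K, E)) (g : C(K, F)) (s : K) :
    pointwiseBilinear β f g s = β (f s) (g s) := rfl

end Superposition

theorem exists_analyticAt_linear_solution {𝕜 E X : Type*} [NontriviallyNormedField 𝕜]
    [NormedAddCommGroup E] [NormedSpace 𝕜 E] [NormedAddCommGroup X] [NormedSpace 𝕜 X]
    [CompleteSpace X] {T : E → X →L[𝕜] X} {a : E} (hT : AnalyticAt 𝕜 T a) (hunit : IsUnit (T a))
    (e : X) :
    ∃ W : E → X, AnalyticAt 𝕜 W a ∧ ∀ᶠ z in 𝓝 a, ∀ w, T z w = e ↔ w = W z := by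
  have hinv : AnalyticAt 𝕜 (fun z => Ring.inverse (T z)) a := by
    obtain ⟨u, hu⟩ := hunit
    exact AnalyticAt.comp (g := Ring.inverse) (hu ▸ analyticAt_inverse u) hT
  refine ⟨fun z => Ring.inverse (T z) e,
    ((ContinuousLinearMap.apply 𝕜 X e).analyticAt _).comp hinv, ?_⟩
  filter_upwards [hT.continuousAt (Units.isOpen.mem_nhds hunit)] with z hz w
  constructor
  · rintro rfl
    exact congr($(Ring.inverse_mul_cancel _ hz) w).symm
  · rintro rfl
    exact congr($(Ring.mul_inverse_cancel _ hz) e)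

section Transport

open scoped unitInterval

variable {E G : Type*} [NormedAddCommGroup E] [NormedSpace ℝ E] [NormedAddCommGroup G]
  [NormedSpace ℝ G]

/-- The indefinite integral `f ↦ (t ↦ ∫₀ᵗ f)` on `C([0, 1], G)`. -/
noncomputable def primitiveCLM : C(I, G) →L[ℝ] C(I, G) :=
  LinearMap.mkContinuous
    { toFun := fun f => ⟨fun t => ∫ s in (0 : ℝ)..t, IccExtend zero_le_one f s,
        (intervalIntegral.continuous_primitive
          (fun a b => f.continuous.Icc_extend'.intervalIntegrable a b) 0).comp
            continuous_subtype_val⟩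
      map_add' := fun f g => by
        ext t
        exact intervalIntegral.integral_add (f.continuous.Icc_extend'.intervalIntegrable _ _)
          (g.continuous.Icc_extend'.intervalIntegrable _ _)
      map_smul' := fun c f => by
        ext t
        exact intervalIntegral.integral_smul c _ }
    1 fun f => by
      refine (ContinuousMap.norm_le _ (by positivity)).2 fun t => ?_
      calc ‖∫ s in (0 : ℝ)..t, IccExtend zero_le_one f s‖ ≤ ‖f‖ * |(t : ℝ) - 0| :=
            intervalIntegral.norm_integral_le_of_norm_le_const fun s _ => f.norm_coe_le_norm _
        _ ≤ ‖f‖ * 1 := by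
            gcongr
            rw [sub_zero, abs_of_nonneg t.2.1]
            exact t.2.2
        _ = 1 * ‖f‖ := mul_comm _ _

theorem primitiveCLM_apply (f : C(I, G)) (t : I) :
    primitiveCLM f t = ∫ s in (0 : ℝ)..t, IccExtend zero_le_one f s := rfl

/-- The Volterra operator `a, w ↦ (t ↦ ∫₀ᵗ a(s) w(s) ds)`, whose fixed points up to a constant
solve the linear equation `w' = a w` on `[0, 1]`. -/
noncomputable def volterra : C(I, G →L[ℝ] G) →L[ℝ] C(I, G) →L[ℝ] C(I, G) :=
  (ContinuousLinearMap.compL ℝ C(I, G) C(I, G) C(I, G) primitiveCLM) ∘L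
    pointwiseBilinear (ContinuousLinearMap.id ℝ (G →L[ℝ] G))

theorem volterra_apply (a : C(I, G →L[ℝ] G)) (w : C(I, G)) (t : I) :
    volterra a w t = ∫ s in (0 : ℝ)..t, IccExtend zero_le_one (fun s => a s (w s)) s := rfl

theorem volterra_rescale {a b : C(I, G →L[ℝ] G)} {v w : C(I, G)} {t : I}
    (hb : ∀ s, b s = (t : ℝ) • a (t * s)) (hv : ∀ s, v s = w (t * s)) (s : I) :
    volterra b v s = volterra a w (t * s) := by
  let φ : ℝ → G := IccExtend zero_le_one fun s => a s (w s)
  have hint : ∀ r ∈ uIcc (0 : ℝ) s,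
      IccExtend zero_le_one (fun s => b s (v s)) r = (t : ℝ) • φ (t * r) := by
    intro r hr
    rw [uIcc_of_le s.2.1] at hr
    have hr' : r ∈ Icc (0 : ℝ) 1 := ⟨hr.1, hr.2.trans s.2.2⟩
    have htr : (t : ℝ) * r ∈ Icc (0 : ℝ) 1 := (t * ⟨r, hr'⟩ : I).2
    simp only [φ, IccExtend_of_mem _ _ hr', IccExtend_of_mem _ _ htr, hb, hv]
    rfl
  rw [volterra_apply, volterra_apply, intervalIntegral.integral_congr hint,
    intervalIntegral.integral_smul, intervalIntegral.smul_integral_comp_mul_left, mul_zero]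
  rfl

variable [CompleteSpace G]

theorem hasDerivWithinAt_of_eq_add_volterra {a : C(I, G →L[ℝ] G)} {w : C(I, G)} {e : G}
    {y : ℝ → G} (hw : ∀ t, w t = e + volterra a w t) (hy : ∀ t : I, y t = w t) (t : I) :
    HasDerivWithinAt y (a t (w t)) (Icc 0 1) t := by
  have hcont : Continuous (IccExtend (zero_le_one (α := ℝ)) fun s => a s (w s)) :=
    Continuous.Icc_extend' (by fun_prop)
  have hderiv := (intervalIntegral.integral_hasDerivAt_right (hcont.intervalIntegrable 0 t)
    (hcont.stronglyMeasurableAtFilter _ _) hcont.continuousAt).const_add e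
  rw [IccExtend_val] at hderiv
  exact hderiv.hasDerivWithinAt.congr_of_mem
    (fun s hs => (hy ⟨s, hs⟩).trans (hw ⟨s, hs⟩)) t.2

theorem exists_analyticAt_volterra_solution {a : E → C(I, G →L[ℝ] G)} {z₀ : E}
    (ha : AnalyticAt ℝ a z₀) (ha0 : a z₀ = 0) (e : G) :
    ∃ W : E → C(I, G), AnalyticAt ℝ W z₀ ∧
      ∀ᶠ z in 𝓝 z₀, ∀ w : C(I, G), (∀ t, w t = e + volterra (a z) w t) ↔ w = W z := by
  have hvolterra := ContinuousLinearMap.analyticAt (𝕜 := ℝ) (E := C(I, G →L[ℝ] G))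
    (F := C(I, G) →L[ℝ] C(I, G)) volterra (a z₀)
  have hT : AnalyticAt ℝ (fun z => 1 - volterra (a z)) z₀ :=
    analyticAt_const.sub (hvolterra.comp ha)
  obtain ⟨W, hW, hsol⟩ := exists_analyticAt_linear_solution hT (by simp [ha0])
    (ContinuousMap.const I e)
  refine ⟨W, hW, ?_⟩
  filter_upwards [hsol] with z hz w
  rw [← hz w]
  simp [ContinuousMap.ext_iff, sub_eq_iff_eq_add]

theorem exists_analyticAt_ray {ω : E → E →L[ℝ] G} (hω : AnalyticAt ℝ ω 0) :
    ∃ a : E → C(I, G), AnalyticAt ℝ a 0 ∧ a 0 = 0 ∧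
      ∀ᶠ z in 𝓝 0, ∀ s : I, a z s = ω ((s : ℝ) • z) z := by
  let ray : E →L[ℝ] C(I, E × E) :=
    pointwiseBilinear (ContinuousLinearMap.lsmul ℝ ℝ) ⟨((↑) : I → ℝ), continuous_subtype_val⟩ ∘L
        ContinuousLinearMap.const ℝ I ∘L ContinuousLinearMap.inl ℝ E E +
      ContinuousLinearMap.const ℝ I ∘L ContinuousLinearMap.inr ℝ E E
  have hray (z : E) (s : I) : ray z s = ((s : ℝ) • z, z) := by
    simp [ray, pointwiseBilinear_apply]
  have hray0 : ray 0 = ContinuousMap.const I (0, 0) := map_zero ray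
  have heval : AnalyticAt ℝ (fun u : E × E => ω u.1 u.2) (0, 0) :=
    ((ContinuousLinearMap.id ℝ (E →L[ℝ] G)).analyticAt_bilinear _).comp
      ((AnalyticAt.comp_of_eq hω analyticAt_fst rfl).prod analyticAt_snd)
  obtain ⟨Φ, hΦ, hΦ_eq⟩ := exists_analyticAt_superposition (K := I) heval
  rw [← hray0] at hΦ hΦ_eq
  have hlocal : ∀ᶠ z in 𝓝 0, ∀ s : I, Φ (ray z) s = ω ((s : ℝ) • z) z := by
    filter_upwards [ray.continuous.continuousAt.eventually hΦ_eq] with z hz s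
    rw [hz s, hray]
  refine ⟨Φ ∘ ray, hΦ.comp (ray.analyticAt 0), ?_, hlocal⟩
  ext s
  simpa using hlocal.self_of_nhds s

theorem exists_analyticAt_primitive {θ : E → E →L[ℝ] G} {z : E} (hθ : AnalyticAt ℝ θ z)
    (hsymm : ∀ᶠ w in 𝓝 z, ∀ h k, fderiv ℝ θ w h k = fderiv ℝ θ w k h) :
    ∃ u : E → G, AnalyticAt ℝ u z ∧ ∀ᶠ w in 𝓝 z, HasFDerivAt u (θ w) w := by
  have htranslate : AnalyticAt ℝ (fun w => θ (z + w)) 0 :=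
    AnalyticAt.comp_of_eq hθ (analyticAt_const.add analyticAt_id) (add_zero z)
  obtain ⟨a, ha, -, hray⟩ := exists_analyticAt_ray htranslate
  have hfrom : Tendsto (fun w => w - z) (𝓝 z) (𝓝 0) := by
    simpa using (continuous_sub_right z).tendsto z
  obtain ⟨ε, hε, hball⟩ := Metric.eventually_nhds_iff_ball.1
    (hθ.eventually_analyticAt.and hsymm)
  have hprimitive (w : E) (hw : w ∈ Metric.ball z ε) :
      HasFDerivAt (fun w => ∫ᶜ x in .segment z w, θ x) (θ w) w :=
    ((convex_ball z ε).hasFDerivWithinAt_curveIntegral_segment_of_hasFDerivWithinAt_symmetric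
      (fun x hx => (hball x hx).1.differentiableAt.hasFDerivAt.hasFDerivWithinAt)
      (fun x hx h _ k _ => (hball x hx).2 h k) (Metric.mem_ball_self hε) hw).hasFDerivAt
        (Metric.isOpen_ball.mem_nhds hw)
  have hanalytic : AnalyticAt ℝ (fun w => primitiveCLM (a (w - z)) 1) z :=
    ((ContinuousMap.evalCLM ℝ (1 : I) ∘L primitiveCLM : C(I, G) →L[ℝ] G).analyticAt _).comp
      (AnalyticAt.comp_of_eq ha (analyticAt_id.sub analyticAt_const) (sub_self z))
  refine ⟨fun w => ∫ᶜ x in .segment z w, θ x, hanalytic.congr ?_,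
    Metric.eventually_nhds_iff_ball.2 ⟨ε, hε, hprimitive⟩⟩
  filter_upwards [hfrom.eventually hray] with w hw
  rw [curveIntegral_segment, primitiveCLM_apply, Icc.coe_one]
  refine intervalIntegral.integral_congr fun s hs => ?_
  rw [uIcc_of_le zero_le_one] at hs
  simp only [IccExtend_of_mem _ _ hs, hw, AffineMap.lineMap_apply_module']
  rw [add_comm]

theorem exists_radial_solution {ω : E → E →L[ℝ] G →L[ℝ] G} (hω : AnalyticAt ℝ ω 0) (e : G) :
    ∃ V : E → G, AnalyticAt ℝ V 0 ∧ V 0 = e ∧ ∀ᶠ z in 𝓝 0, fderiv ℝ V z z = ω z z (V z) := by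
  obtain ⟨a, ha, ha0, hray⟩ := exists_analyticAt_ray hω
  obtain ⟨W, hW, hfix⟩ := exists_analyticAt_volterra_solution ha ha0 e
  have hV : AnalyticAt ℝ (fun z => W z 1) 0 :=
    ((ContinuousMap.evalCLM ℝ (1 : I) : C(I, G) →L[ℝ] G).analyticAt _).comp hW
  obtain ⟨ε, hε, hball⟩ := Metric.eventually_nhds_iff_ball.1
    (hray.and (hfix.and hV.eventually_analyticAt))
  have hstar : StarConvex ℝ 0 (Metric.ball (0 : E) ε) :=
    (convex_ball 0 ε).starConvex (Metric.mem_ball_self hε)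
  -- The equations along the rays to `t • z` and to `z` differ by rescaling time, so their unique
  -- solutions do too.
  have hscale (z : E) (hz : z ∈ Metric.ball 0 ε) (t : I) : W ((t : ℝ) • z) 1 = W z t := by
    have htz := hstar.smul_mem hz t.2.1 t.2.2
    let w : C(I, G) := ⟨fun s => W z (t * s), by fun_prop⟩
    have hw : w = W ((t : ℝ) • z) := by
      refine ((hball _ htz).2.1 w).1 fun s => ?_
      rw [volterra_rescale (a := a z) (w := W z) (t := t) _ fun _ => rfl]
      · exact ((hball z hz).2.1 (W z)).2 rfl (t * s)
      · intro s
        simp [(hball z hz).1, (hball _ htz).1, smul_smul, mul_comm]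
    rw [← hw]
    exact congrArg (W z) (mul_one t)
  refine ⟨fun z => W z 1, hV, ?_, Metric.eventually_nhds_iff_ball.2 ⟨ε, hε, fun z hz => ?_⟩⟩
  · simpa [ha0] using ((hball 0 (Metric.mem_ball_self hε)).2.1 (W 0)).2 rfl 1
  · have hray_deriv : HasDerivAt (fun t : ℝ => W (t • z) 1) (fderiv ℝ (fun z => W z 1) z z) 1 := by
      have hline : HasDerivAt (fun t : ℝ => t • z) z 1 := by
        simpa using (hasDerivAt_id (1 : ℝ)).smul_const z
      exact (hball z hz).2.2.differentiableAt.hasFDerivAt.comp_hasDerivAt_of_eq 1 hline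
        (one_smul ℝ z).symm
    have hint := hasDerivWithinAt_of_eq_add_volterra (y := fun t => W (t • z) 1)
      (((hball z hz).2.1 (W z)).2 rfl) (hscale z hz) 1
    rw [(hball z hz).1 1] at hint
    simpa using (uniqueDiffOn_Icc_zero_one 1 (by simp)).eq_deriv _
      hray_deriv.hasDerivWithinAt hint

end Transport

theorem eq_zero_of_norm_fderiv_radial_add_le {E G : Type*} [NormedAddCommGroup E]
    [NormedSpace ℝ E] [NormedAddCommGroup G] [NormedSpace ℝ G] {s : Set E} {Q : E → G} {K : ℝ}
    (hs : StarConvex ℝ 0 s) (hQ : ∀ z ∈ s, DifferentiableAt ℝ Q z)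
    (hbound : ∀ z ∈ s, ‖fderiv ℝ Q z z + Q z‖ ≤ K * ‖z‖ * ‖Q z‖) {z : E} (hz : z ∈ s) :
    Q z = 0 := by
  have hmem (t : ℝ) (ht : t ∈ Icc (0 : ℝ) 1) : t • z ∈ s := hs.smul_mem hz ht.1 ht.2
  let ρ : ℝ → G := fun t => t • Q (t • z)
  let ρ' : ℝ → G := fun t => fderiv ℝ Q (t • z) (t • z) + Q (t • z)
  have hderiv (t : ℝ) (ht : t ∈ Icc (0 : ℝ) 1) : HasDerivAt ρ (ρ' t) t := by
    have hline : HasDerivAt (fun t : ℝ => t • z) z t := by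
      simpa using (hasDerivAt_id t).smul_const z
    have hQline : HasDerivAt (fun t : ℝ => Q (t • z)) (fderiv ℝ Q (t • z) z) t :=
      (hQ _ (hmem t ht)).hasFDerivAt.comp_hasDerivAt t hline
    exact ((hasDerivAt_id t).smul hQline).congr_deriv (by simp [ρ'])
  have hρ' (t : ℝ) (ht : t ∈ Ico (0 : ℝ) 1) : ‖ρ' t‖ ≤ K * ‖z‖ * ‖ρ t‖ := by
    calc ‖ρ' t‖ ≤ K * ‖t • z‖ * ‖Q (t • z)‖ := hbound _ (hmem t (Ico_subset_Icc_self ht))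
      _ = K * ‖z‖ * ‖ρ t‖ := by
        simp only [ρ, norm_smul]
        ring
  have hρ1 : ρ 1 = 0 := eq_zero_of_abs_deriv_le_mul_abs_self_of_eq_zero_right
    (fun t ht => (hderiv t ht).continuousAt.continuousWithinAt)
    (fun t ht => (hderiv t (Ico_subset_Icc_self ht)).hasDerivWithinAt) (zero_smul ℝ _) hρ' 1
    (by simp)
  simpa [ρ] using hρ1

section Connection

variable {E G : Type*} [NormedAddCommGroup E] [NormedSpace ℝ E] [NormedAddCommGroup G]
  [NormedSpace ℝ G]

/-- The linear connection `d + ω` on the trivial bundle `E × G` has zero curvature at `z`: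
`dω + ω ∧ ω = 0`, written as the symmetry in `h, k` of `D_h ω(k) + ω(h) ω(k)`. -/
def IsFlatAt (ω : E → E →L[ℝ] G →L[ℝ] G) (z : E) : Prop :=
  ∀ h k v, fderiv ℝ ω z h k v + ω z h (ω z k v) = fderiv ℝ ω z k h v + ω z k (ω z h v)

/-- The covariant derivative `dV + ω V` of the section `V` for the connection `d + ω`. -/
noncomputable def covDeriv (ω : E → E →L[ℝ] G →L[ℝ] G) (V : E → G) (z : E) : E →L[ℝ] G :=
  fderiv ℝ V z + ContinuousLinearMap.apply ℝ G (V z) ∘L ω z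

variable {ω : E → E →L[ℝ] G →L[ℝ] G} {V : E → G} {z : E}

theorem covDeriv_apply (h : E) : covDeriv ω V z h = fderiv ℝ V z h + ω z h (V z) := rfl

theorem differentiableAt_covDeriv [CompleteSpace G] (hω : DifferentiableAt ℝ ω z)
    (hV : AnalyticAt ℝ V z) : DifferentiableAt ℝ (covDeriv ω V) z :=
  hV.fderiv.differentiableAt.add
    (((ContinuousLinearMap.apply ℝ G : G →L[ℝ] _).differentiableAt.comp z
      hV.differentiableAt).clm_comp hω)

theorem fderiv_covDeriv_apply [CompleteSpace G] (hω : DifferentiableAt ℝ ω z)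
    (hV : AnalyticAt ℝ V z) (h k : E) :
    fderiv ℝ (covDeriv ω V) z h k =
      fderiv ℝ (fderiv ℝ V) z h k + (fderiv ℝ ω z h k (V z) + ω z k (fderiv ℝ V z h)) := by
  have happly : HasFDerivAt (fun w => (ContinuousLinearMap.apply ℝ G : G →L[ℝ] _) (V w)) _ z :=
    (ContinuousLinearMap.apply ℝ G : G →L[ℝ] _).hasFDerivAt.comp z hV.differentiableAt.hasFDerivAt
  have hsum := hV.fderiv.differentiableAt.hasFDerivAt.add (happly.clm_comp hω.hasFDerivAt)
  have hderiv : fderiv ℝ (covDeriv ω V) z = _ := hsum.fderiv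
  simp [hderiv]

theorem IsFlatAt.fderiv_covDeriv_add_comm [CompleteSpace G] (hflat : IsFlatAt ω z)
    (hω : DifferentiableAt ℝ ω z) (hV : AnalyticAt ℝ V z) (h k : E) :
    fderiv ℝ (covDeriv ω V) z h k + ω z h (covDeriv ω V z k) =
      fderiv ℝ (covDeriv ω V) z k h + ω z k (covDeriv ω V z h) := by
  have hsymm : fderiv ℝ (fderiv ℝ V) z h k = fderiv ℝ (fderiv ℝ V) z k h :=
    hV.contDiffAt.isSymmSndFDerivAt_of_omega h k
  simp only [fderiv_covDeriv_apply hω hV, covDeriv_apply, map_add, hsymm]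
  linear_combination (norm := module) hflat h k (V z)

theorem IsFlatAt.norm_fderiv_covDeriv_radial_add_le [CompleteSpace G] (hflat : IsFlatAt ω z)
    (hω : DifferentiableAt ℝ ω z) (hV : AnalyticAt ℝ V z)
    (hradial : ∀ᶠ w in 𝓝 z, covDeriv ω V w w = 0) :
    ‖fderiv ℝ (covDeriv ω V) z z + covDeriv ω V z‖ ≤ ‖ω z‖ * ‖z‖ * ‖covDeriv ω V z‖ := by
  have hself : fderiv ℝ (fun w => covDeriv ω V w w) z = 0 := by
    rw [EventuallyEq.fderiv_eq hradial, fderiv_fun_const, Pi.zero_apply]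
  rw [fderiv_clm_apply (differentiableAt_covDeriv hω hV) differentiableAt_fun_id] at hself
  have hdual (h : E) : (fderiv ℝ (covDeriv ω V) z z + covDeriv ω V z) h =
      -ω z z (covDeriv ω V z h) := by
    have hh : covDeriv ω V z h + fderiv ℝ (covDeriv ω V) z h z = 0 := by
      simpa using congr($hself h)
    have hcomm := hflat.fderiv_covDeriv_add_comm hω hV z h
    rw [hradial.self_of_nhds, map_zero, add_zero] at hcomm
    rw [add_apply]
    linear_combination (norm := module) hh + hcomm
  refine ContinuousLinearMap.opNorm_le_bound _ (by positivity) fun h => ?_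
  calc ‖(fderiv ℝ (covDeriv ω V) z z + covDeriv ω V z) h‖ = ‖ω z z (covDeriv ω V z h)‖ := by
        rw [hdual, norm_neg]
    _ ≤ ‖ω z‖ * ‖z‖ * ‖covDeriv ω V z h‖ := (ω z).le_opNorm₂ _ _
    _ ≤ ‖ω z‖ * ‖z‖ * ‖covDeriv ω V z‖ * ‖h‖ := by
        rw [mul_assoc _ ‖covDeriv ω V z‖]
        gcongr
        exact (covDeriv ω V z).le_opNorm h

variable [CompleteSpace G]

theorem exists_parallel_zero (hω : AnalyticAt ℝ ω 0) (hflat : ∀ᶠ z in 𝓝 0, IsFlatAt ω z) (e : G) :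
    ∃ V : E → G, AnalyticAt ℝ V 0 ∧ V 0 = e ∧ ∀ᶠ z in 𝓝 0, covDeriv ω V z = 0 := by
  obtain ⟨V, hV, hV0, hradial⟩ := exists_radial_solution hω.neg e
  have hradial' : ∀ᶠ z in 𝓝 0, covDeriv ω V z z = 0 := by
    filter_upwards [hradial] with z hz
    simp [covDeriv_apply, hz]
  have hbounded : ∀ᶠ z in 𝓝 0, ‖ω z‖ < ‖ω 0‖ + 1 :=
    (ContinuousAt.norm (E := E →L[ℝ] G →L[ℝ] G) hω.continuousAt).eventually_lt_const (lt_add_one _)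
  obtain ⟨ε, hε, hball⟩ := Metric.eventually_nhds_iff_ball.1 (hω.eventually_analyticAt.and
    (hV.eventually_analyticAt.and (hflat.and (hbounded.and hradial'.eventually_nhds))))
  refine ⟨V, hV, hV0, Metric.eventually_nhds_iff_ball.2 ⟨ε, hε, fun z hz => ?_⟩⟩
  refine eq_zero_of_norm_fderiv_radial_add_le (K := ‖ω 0‖ + 1)
    ((convex_ball 0 ε).starConvex (Metric.mem_ball_self hε)) (fun w hw => ?_) (fun w hw => ?_) hz
  all_goals obtain ⟨hωw, hVw, hflatw, hboundw, hradialw⟩ := hball w hw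
  · exact differentiableAt_covDeriv hωw.differentiableAt hVw
  · refine (hflatw.norm_fderiv_covDeriv_radial_add_le hωw.differentiableAt hVw hradialw).trans ?_
    gcongr

theorem exists_parallel (hω : AnalyticAt ℝ ω z) (hflat : ∀ᶠ w in 𝓝 z, IsFlatAt ω w) (e : G) :
    ∃ V : E → G, AnalyticAt ℝ V z ∧ V z = e ∧ ∀ᶠ w in 𝓝 z, covDeriv ω V w = 0 := by
  have hto : Tendsto (fun w => z + w) (𝓝 0) (𝓝 z) := by
    simpa using (continuous_const_add z).tendsto 0
  have hfrom : Tendsto (fun w => w - z) (𝓝 z) (𝓝 0) := by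
    simpa using (continuous_sub_right z).tendsto z
  have htranslate : AnalyticAt ℝ (fun w => ω (z + w)) 0 :=
    AnalyticAt.comp_of_eq hω (analyticAt_const.add analyticAt_id) (add_zero z)
  obtain ⟨V, hV, hV0, hpar⟩ := exists_parallel_zero htranslate (e := e) <| by
    filter_upwards [hto.eventually hflat] with w hw
    have hderiv : fderiv ℝ (fun w => ω (z + w)) w = fderiv ℝ ω (z + w) :=
      fderiv_comp_add_left (𝕜 := ℝ) (F := E →L[ℝ] G →L[ℝ] G) z
    simpa only [IsFlatAt, hderiv] using hw
  refine ⟨fun w => V (w - z), AnalyticAt.comp_of_eq hV (analyticAt_id.sub analyticAt_const)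
    (sub_self z), by simpa using hV0, ?_⟩
  filter_upwards [hfrom.eventually hpar] with w hw
  rw [← hw]
  ext h
  simp [covDeriv_apply, fderiv_comp_sub]

end Connection

section AffineMap

-- Lets instance search reach the norms on nested spaces `E →L[ℝ] F →L[ℝ] G`.
set_option maxSynthPendingDepth 3

variable {E F : Type*} [NormedAddCommGroup E] [NormedSpace ℝ E] [NormedAddCommGroup F]
  [NormedSpace ℝ F]

/-- The map `Ψ` is affine at `z` for the connection on `E` with Christoffel symbols `Γ`, its target
carrying the trivial connection: the second fundamental form `D²Ψ(h, k) - DΨ(Γ(h, k))` vanishes. -/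
def IsAffineAt (Γ : E → E →L[ℝ] E →L[ℝ] E) (Ψ : E → F) (z : E) : Prop :=
  ∀ h k, fderiv ℝ (fderiv ℝ Ψ) z h k = fderiv ℝ Ψ z (Γ z h k)

/-- The connection `h ↦ (θ ↦ -θ ∘ A h)` induced on `Hom(E, F)` by the connection `A` on `E`. -/
noncomputable def homConnection :
    (E →L[ℝ] E →L[ℝ] E) →L[ℝ] E →L[ℝ] (E →L[ℝ] F) →L[ℝ] E →L[ℝ] F :=
  -ContinuousLinearMap.compL ℝ E (E →L[ℝ] E) ((E →L[ℝ] F) →L[ℝ] E →L[ℝ] F)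
    (ContinuousLinearMap.compL ℝ E E F).flip

theorem homConnection_apply (A : E →L[ℝ] E →L[ℝ] E) (h : E) (θ : E →L[ℝ] F) :
    homConnection A h θ = -θ ∘L A h := rfl

variable {Γ : E → E →L[ℝ] E →L[ℝ] E} {z : E}

theorem IsFlatAt.homConnection_comp (hflat : IsFlatAt Γ z) (hΓ : DifferentiableAt ℝ Γ z) :
    IsFlatAt (fun w => homConnection (F := F) (Γ w)) z := by
  have hhom : HasFDerivAt (homConnection (F := F)) homConnection (Γ z) :=
    ContinuousLinearMap.hasFDerivAt (𝕜 := ℝ) (E := E →L[ℝ] E →L[ℝ] E)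
      (F := E →L[ℝ] (E →L[ℝ] F) →L[ℝ] E →L[ℝ] F) homConnection
  have hderiv : fderiv ℝ (fun w => homConnection (F := F) (Γ w)) z =
      homConnection ∘L fderiv ℝ Γ z :=
    (HasFDerivAt.comp z hhom hΓ.hasFDerivAt).fderiv
  intro h k θ
  ext v
  have hθ := congrArg θ (hflat h k v)
  simp only [map_add] at hθ
  simp only [hderiv, ContinuousLinearMap.comp_apply, homConnection_apply, add_apply, neg_apply]
  linear_combination (norm := module) -hθ

theorem IsAffineAt.hasDerivAt_fderiv_apply {Ψ : E → F} {γ v : ℝ → E} {a : E} {r x : ℝ}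
    (hΨ : IsAffineAt Γ Ψ (γ x)) (hdiff : DifferentiableAt ℝ (fderiv ℝ Ψ) (γ x))
    (hγ : HasDerivAt γ (v x) x) (hv : HasDerivAt v a x)
    (hgeodesic : a + Γ (γ x) (v x) (v x) = r • v x) :
    HasDerivAt (fun t => fderiv ℝ Ψ (γ t) (v t)) (r • fderiv ℝ Ψ (γ x) (v x)) x := by
  have hDΨ : HasDerivAt (fun t => fderiv ℝ Ψ (γ t)) (fderiv ℝ (fderiv ℝ Ψ) (γ x) (v x)) x :=
    hdiff.hasFDerivAt.comp_hasDerivAt x hγ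
  refine (hDΨ.clm_apply hv).congr_deriv ?_
  rw [hΨ, ← map_add, add_comm, hgeodesic, map_smul]

variable [CompleteSpace F]

theorem exists_analyticAt_isAffineAt [CompleteSpace E] (hΓ : AnalyticAt ℝ Γ z)
    (hsymm : ∀ᶠ w in 𝓝 z, ∀ h k, Γ w h k = Γ w k h) (hflat : ∀ᶠ w in 𝓝 z, IsFlatAt Γ w)
    (α : E →L[ℝ] F) :
    ∃ Ψ : E → F, AnalyticAt ℝ Ψ z ∧ fderiv ℝ Ψ z = α ∧ ∀ᶠ w in 𝓝 z, IsAffineAt Γ Ψ w := by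
  have hflat' : ∀ᶠ w in 𝓝 z, IsFlatAt (fun w => homConnection (F := F) (Γ w)) w := by
    filter_upwards [hΓ.eventually_analyticAt, hflat] with w hΓw hflatw
    exact hflatw.homConnection_comp hΓw.differentiableAt
  have hhom : AnalyticAt ℝ (homConnection (F := F)) (Γ z) :=
    ContinuousLinearMap.analyticAt (𝕜 := ℝ) (E := E →L[ℝ] E →L[ℝ] E)
      (F := E →L[ℝ] (E →L[ℝ] F) →L[ℝ] E →L[ℝ] F) homConnection (Γ z)
  obtain ⟨θ, hθ, hθz, hpar⟩ :=
    exists_parallel (hhom.comp hΓ) hflat' α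
  have hθderiv : ∀ᶠ w in 𝓝 z, ∀ h k, fderiv ℝ θ w h k = θ w (Γ w h k) := by
    filter_upwards [hpar] with w hw h k
    have hwh : fderiv ℝ θ w h + -θ w ∘L Γ w h = 0 := congr($hw h)
    exact congr($(add_neg_eq_zero.1 hwh) k)
  obtain ⟨Ψ, hΨ, hΨderiv⟩ := exists_analyticAt_primitive hθ <| by
    filter_upwards [hθderiv, hsymm] with w hw hsymmw h k
    rw [hw, hw, hsymmw]
  refine ⟨Ψ, hΨ, by rw [hΨderiv.self_of_nhds.fderiv, hθz], ?_⟩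
  filter_upwards [hΨderiv.eventually_nhds, hθderiv] with w hΨw hw h k
  rw [EventuallyEq.fderiv_eq (hΨw.mono fun _ => HasFDerivAt.fderiv), hw,
    hΨw.self_of_nhds.fderiv]

end AffineMap

section Plane

theorem clm_prod_apply_eq {F : Type*} [NormedAddCommGroup F] [NormedSpace ℝ F]
    (L : ℝ × ℝ →L[ℝ] F) (v : ℝ × ℝ) : L v = v.1 • L (1, 0) + v.2 • L (0, 1) := by
  rw [← map_smul, ← map_smul, ← map_add]
  simp

/-- The Jacobian determinant of a map of the plane, read off from its Fréchet derivative. -/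
noncomputable def jacobian (Ψ : ℝ × ℝ → ℝ × ℝ) (z : ℝ × ℝ) : ℝ :=
  (fderiv ℝ Ψ z (1, 0)).1 * (fderiv ℝ Ψ z (0, 1)).2 -
    (fderiv ℝ Ψ z (0, 1)).1 * (fderiv ℝ Ψ z (1, 0)).2

variable {Ψ : ℝ × ℝ → ℝ × ℝ} {Γ : ℝ × ℝ → ℝ × ℝ →L[ℝ] ℝ × ℝ →L[ℝ] ℝ × ℝ} {z : ℝ × ℝ}

theorem jacobian_eq_pdx_mul_pdy_sub (hΨ : DifferentiableAt ℝ Ψ z) :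
    jacobian Ψ z = pdx (fun w => (Ψ w).1) z * pdy (fun w => (Ψ w).2) z -
      pdy (fun w => (Ψ w).1) z * pdx (fun w => (Ψ w).2) z := by
  simp only [pdx, pdy, hΨ.hasFDerivAt.fst.fderiv, hΨ.hasFDerivAt.snd.fderiv]
  rfl

theorem fderiv_apply_ne_zero_of_jacobian_ne_zero (hΨ : jacobian Ψ z ≠ 0) {v : ℝ × ℝ}
    (hv : v ≠ 0) : fderiv ℝ Ψ z v ≠ 0 := by
  intro hzero
  rw [clm_prod_apply_eq, Prod.ext_iff] at hzero
  obtain ⟨h₁, h₂⟩ := hzero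
  simp only [Prod.fst_add, Prod.snd_add, Prod.smul_fst, Prod.smul_snd, smul_eq_mul,
    Prod.fst_zero, Prod.snd_zero] at h₁ h₂
  have hv₁ : v.1 * jacobian Ψ z = 0 := by
    rw [jacobian]
    linear_combination (fderiv ℝ Ψ z (0, 1)).2 * h₁ - (fderiv ℝ Ψ z (0, 1)).1 * h₂
  have hv₂ : v.2 * jacobian Ψ z = 0 := by
    rw [jacobian]
    linear_combination (fderiv ℝ Ψ z (1, 0)).1 * h₂ - (fderiv ℝ Ψ z (1, 0)).2 * h₁
  exact hv (Prod.ext ((mul_eq_zero_iff_right hΨ).1 hv₁) ((mul_eq_zero_iff_right hΨ).1 hv₂))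

theorem IsAffineAt.hasFDerivAt_jacobian (hΨ : IsAffineAt Γ Ψ z)
    (hdiff : DifferentiableAt ℝ (fderiv ℝ Ψ) z)
    (htrace : ∀ h, (Γ z h (1, 0)).1 + (Γ z h (0, 1)).2 = 0) :
    HasFDerivAt (jacobian Ψ) (0 : ℝ × ℝ →L[ℝ] ℝ) z := by
  have hcolumn (e : ℝ × ℝ) : HasFDerivAt (fun w => fderiv ℝ Ψ w e)
      ((fderiv ℝ Ψ z) ∘L (Γ z).flip e) z := by
    refine (hdiff.hasFDerivAt.clm_apply (hasFDerivAt_const e z)).congr_fderiv <|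
      ContinuousLinearMap.ext fun h => ?_
    simp [hΨ h e]
  refine (((hcolumn (1, 0)).fst.mul (hcolumn (0, 1)).snd).sub
    ((hcolumn (0, 1)).fst.mul (hcolumn (1, 0)).snd)).congr_fderiv <|
      ContinuousLinearMap.ext fun h => ?_
  have hexpand (e : ℝ × ℝ) := clm_prod_apply_eq (fderiv ℝ Ψ z) (Γ z h e)
  simp only [sub_apply, add_apply, smul_apply, ContinuousLinearMap.comp_apply,
    ContinuousLinearMap.flip_apply, hexpand, ContinuousLinearMap.coe_fst',
    ContinuousLinearMap.coe_snd', Prod.fst_add, Prod.snd_add, Prod.smul_fst, Prod.smul_snd,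
    smul_eq_mul, zero_apply]
  linear_combination ((fderiv ℝ Ψ z (1, 0)).1 * (fderiv ℝ Ψ z (0, 1)).2 -
    (fderiv ℝ Ψ z (0, 1)).1 * (fderiv ℝ Ψ z (1, 0)).2) * htrace h

theorem exists_isAffineAt_jacobian_eq_one (hΓ : AnalyticAt ℝ Γ z)
    (hsymm : ∀ᶠ w in 𝓝 z, ∀ h k, Γ w h k = Γ w k h) (hflat : ∀ᶠ w in 𝓝 z, IsFlatAt Γ w)
    (htrace : ∀ᶠ w in 𝓝 z, ∀ h, (Γ w h (1, 0)).1 + (Γ w h (0, 1)).2 = 0) :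
    ∃ Ψ : ℝ × ℝ → ℝ × ℝ,
      ∀ᶠ w in 𝓝 z, AnalyticAt ℝ Ψ w ∧ IsAffineAt Γ Ψ w ∧ jacobian Ψ w = 1 := by
  obtain ⟨Ψ, hΨ, hΨz, haffine⟩ :=
    exists_analyticAt_isAffineAt hΓ hsymm hflat (ContinuousLinearMap.id ℝ (ℝ × ℝ))
  have hjacobian : ∀ᶠ w in 𝓝 z, HasFDerivAt (jacobian Ψ) (0 : ℝ × ℝ →L[ℝ] ℝ) w := by
    filter_upwards [hΨ.eventually_analyticAt, haffine, htrace] with w hΨw haffinew htracew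
    exact haffinew.hasFDerivAt_jacobian hΨw.fderiv.differentiableAt htracew
  obtain ⟨ε, hε, hball⟩ := Metric.eventually_nhds_iff_ball.1 hjacobian
  refine ⟨Ψ, ?_⟩
  filter_upwards [hΨ.eventually_analyticAt, haffine, Metric.ball_mem_nhds z hε]
    with w hΨw haffinew hw
  refine ⟨hΨw, haffinew, ?_⟩
  calc jacobian Ψ w = jacobian Ψ z :=
        Metric.isOpen_ball.is_const_of_fderiv_eq_zero (convex_ball z ε).isPreconnected
          (fun x hx => (hball x hx).differentiableAt.differentiableWithinAt)
          (fun x hx => (hball x hx).fderiv) hw (Metric.mem_ball_self hε)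
    _ = 1 := by simp [jacobian, hΨz]

end Plane

section CubicConnection

set_option maxSynthPendingDepth 3

/-- The symmetric connection on the plane, trace-free and linear in `(a, b, c, d)`, whose
unparametrized geodesics are the graphs with `y'' = a y'³ + 3 b y'² + 3 c y' + d`. -/
noncomputable def cubicConnection :
    ℝ × ℝ × ℝ × ℝ →L[ℝ] ℝ × ℝ →L[ℝ] ℝ × ℝ →L[ℝ] ℝ × ℝ :=
  let dx := ContinuousLinearMap.fst ℝ ℝ ℝ
  let dy := ContinuousLinearMap.snd ℝ ℝ ℝ
  LinearMap.toContinuousLinearMap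
    { toFun := fun (a, b, c, d) =>
        dx.smulRight (dx.smulRight (c, -d) + dy.smulRight (b, -c)) +
          dy.smulRight (dx.smulRight (b, -c) + dy.smulRight (a, -b))
      map_add' := fun p q => by ext <;> simp <;> ring
      map_smul' := fun t q => by ext <;> simp <;> ring }

theorem cubicConnection_apply (q : ℝ × ℝ × ℝ × ℝ) (h k : ℝ × ℝ) :
    cubicConnection q h k =
      (q.2.2.1 * (h.1 * k.1) + q.2.1 * (h.1 * k.2 + h.2 * k.1) + q.1 * (h.2 * k.2),
        -(q.2.2.2 * (h.1 * k.1) + q.2.2.1 * (h.1 * k.2 + h.2 * k.1) + q.2.1 * (h.2 * k.2))) := by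
  ext <;> simp [cubicConnection] <;> ring

theorem cubicConnection_comm (q : ℝ × ℝ × ℝ × ℝ) (h k : ℝ × ℝ) :
    cubicConnection q h k = cubicConnection q k h := by
  rw [cubicConnection_apply, cubicConnection_apply]
  ring_nf

theorem cubicConnection_trace (q : ℝ × ℝ × ℝ × ℝ) (h : ℝ × ℝ) :
    (cubicConnection q h (1, 0)).1 + (cubicConnection q h (0, 1)).2 = 0 := by
  simp only [cubicConnection_apply]
  ring

theorem cubicConnection_graph (a b c d p : ℝ) :
    ((0, a * p ^ 3 + 3 * b * p ^ 2 + 3 * c * p + d) : ℝ × ℝ) +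
        cubicConnection (a, b, c, d) (1, p) (1, p) =
      (c + 2 * b * p + a * p ^ 2) • ((1, p) : ℝ × ℝ) := by
  rw [cubicConnection_apply]
  ext <;> simp only [Prod.mk_add_mk, Prod.smul_mk, smul_eq_mul] <;> ring

theorem analyticAt_cubicConnection {A B C D : ℝ × ℝ → ℝ} {z : ℝ × ℝ} (hA : AnalyticAt ℝ A z)
    (hB : AnalyticAt ℝ B z) (hC : AnalyticAt ℝ C z) (hD : AnalyticAt ℝ D z) :
    AnalyticAt ℝ (fun w => cubicConnection (A w, B w, C w, D w)) z := by
  have hlinear : AnalyticAt ℝ cubicConnection (A z, B z, C z, D z) :=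
    ContinuousLinearMap.analyticAt (𝕜 := ℝ) (E := ℝ × ℝ × ℝ × ℝ)
      (F := ℝ × ℝ →L[ℝ] ℝ × ℝ →L[ℝ] ℝ × ℝ) cubicConnection _
  exact AnalyticAt.fun_comp (f := fun w => (A w, B w, C w, D w)) hlinear
    (hA.prod (hB.prod (hC.prod hD)))

theorem isFlatAt_cubicConnection {A B C D : ℝ × ℝ → ℝ} {z : ℝ × ℝ} (hA : DifferentiableAt ℝ A z)
    (hB : DifferentiableAt ℝ B z) (hC : DifferentiableAt ℝ C z) (hD : DifferentiableAt ℝ D z)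
    (h1 : pdy D z - pdx C z = 2 * (B z * D z - C z ^ 2))
    (h2 : pdy C z - pdx B z = A z * D z - B z * C z)
    (h3 : pdy B z - pdx A z = 2 * (A z * C z - B z ^ 2)) :
    IsFlatAt (fun w => cubicConnection (A w, B w, C w, D w)) z := by
  have hlinear : HasFDerivAt cubicConnection cubicConnection (A z, B z, C z, D z) :=
    ContinuousLinearMap.hasFDerivAt (𝕜 := ℝ) (E := ℝ × ℝ × ℝ × ℝ)
      (F := ℝ × ℝ →L[ℝ] ℝ × ℝ →L[ℝ] ℝ × ℝ) cubicConnection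
  have hderiv : fderiv ℝ (fun w => cubicConnection (A w, B w, C w, D w)) z = cubicConnection ∘L
      (fderiv ℝ A z).prod ((fderiv ℝ B z).prod ((fderiv ℝ C z).prod (fderiv ℝ D z))) :=
    (HasFDerivAt.comp z hlinear (hA.hasFDerivAt.prodMk
      (hB.hasFDerivAt.prodMk (hC.hasFDerivAt.prodMk hD.hasFDerivAt)))).fderiv
  intro h k v
  have hpartial (g : ℝ × ℝ → ℝ) (u : ℝ × ℝ) :
      fderiv ℝ g z u = u.1 * pdx g z + u.2 * pdy g z := clm_prod_apply_eq _ u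
  rw [hderiv]
  ext
  · simp only [ContinuousLinearMap.comp_apply, ContinuousLinearMap.prod_apply, hpartial,
      cubicConnection_apply, Prod.mk_add_mk]
    linear_combination (h.2 * k.1 - h.1 * k.2) * (v.1 * h2 + v.2 * h3)
  · simp only [ContinuousLinearMap.comp_apply, ContinuousLinearMap.prod_apply, hpartial,
      cubicConnection_apply, Prod.mk_add_mk]
    linear_combination (h.1 * k.2 - h.2 * k.1) * (v.1 * h1 + v.2 * h2)

end CubicConnection

theorem div_eq_div_of_hasDerivAt_mul {I : Set ℝ} (hI : IsOpen I) (hconn : I.OrdConnected)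
    {f g r : ℝ → ℝ} (hf : ∀ x ∈ I, HasDerivAt f (r x * f x) x)
    (hg : ∀ x ∈ I, HasDerivAt g (r x * g x) x) (hne : ∀ x ∈ I, g x ≠ 0) {x y : ℝ} (hx : x ∈ I)
    (hy : y ∈ I) : f x / g x = f y / g y := by
  have hquot (t : ℝ) (ht : t ∈ I) : HasDerivAt (fun t => f t / g t) 0 t :=
    ((hf t ht).div (hg t ht) (hne t ht)).congr_deriv (by ring)
  exact hI.is_const_of_deriv_eq_zero hconn.isPreconnected
    (fun t ht => (hquot t ht).differentiableAt.differentiableWithinAt)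
    (fun t ht => (hquot t ht).deriv) hx hy

theorem linear_comb_eq_zero_of_hasDerivAt_smul {I : Set ℝ} (hI : IsOpen I)
    (hconn : I.OrdConnected) {g : ℝ → ℝ × ℝ} {r : ℝ → ℝ}
    (hg : ∀ x ∈ I, HasDerivAt g (r x • g x) x) (hne : ∀ x ∈ I, g x ≠ 0) {a b x y : ℝ}
    (hx : x ∈ I) (hy : y ∈ I) (hzero : a * (g x).1 + b * (g x).2 = 0) :
    a * (g y).1 + b * (g y).2 = 0 := by
  -- The ratio is taken against `g₁² + g₂²`, since each component of `g` alone may vanish.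
  let normSq : ℝ → ℝ := fun t => (g t).1 ^ 2 + (g t).2 ^ 2
  have hnormSq_ne (t : ℝ) (ht : t ∈ I) : normSq t ≠ 0 := by
    intro h
    obtain ⟨h₁, h₂⟩ := (add_eq_zero_iff_of_nonneg (sq_nonneg _) (sq_nonneg _)).1 h
    exact hne t ht (Prod.ext (pow_eq_zero_iff two_ne_zero |>.1 h₁)
      (pow_eq_zero_iff two_ne_zero |>.1 h₂))
  have hcomponents (t : ℝ) (ht : t ∈ I) : HasDerivAt (fun t => (g t).1) (r t * (g t).1) t ∧
      HasDerivAt (fun t => (g t).2) (r t * (g t).2) t :=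
    ⟨(hg t ht).fst, (hg t ht).snd⟩
  have hquot := div_eq_div_of_hasDerivAt_mul hI hconn (r := fun t => 2 * r t)
    (f := fun t => (a * (g t).1 + b * (g t).2) ^ 2) (g := normSq)
    (fun t ht => ((((hcomponents t ht).1.const_mul a).add
      ((hcomponents t ht).2.const_mul b)).pow 2).congr_deriv (by simp; ring))
    (fun t ht => (((hcomponents t ht).1.pow 2).add ((hcomponents t ht).2.pow 2)).congr_deriv
      (by simp [normSq]; ring)) hnormSq_ne hy hx
  simpa [hzero, hnormSq_ne y hy] using hquot

theorem exists_line_of_hasDerivAt_smul {I : Set ℝ} (hI : IsOpen I) (hconn : I.OrdConnected)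
    {w g : ℝ → ℝ × ℝ} {r : ℝ → ℝ} (hw : ∀ x ∈ I, HasDerivAt w (g x) x)
    (hg : ∀ x ∈ I, HasDerivAt g (r x • g x) x) (hne : ∀ x ∈ I, g x ≠ 0) :
    ∃ a b k : ℝ, (a, b) ≠ ((0 : ℝ), (0 : ℝ)) ∧ ∀ x ∈ I, a * (w x).1 + b * (w x).2 = k := by
  rcases I.eq_empty_or_nonempty with rfl | ⟨x₀, hx₀⟩
  · exact ⟨1, 0, 0, by simp, by simp⟩
  let a := (g x₀).2
  let b := -(g x₀).1
  have hab : (a, b) ≠ ((0 : ℝ), (0 : ℝ)) := by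
    intro h
    obtain ⟨ha, hb⟩ := Prod.mk.inj h
    exact hne x₀ hx₀ (Prod.ext (neg_eq_zero.1 hb) ha)
  have hzero (x : ℝ) (hx : x ∈ I) : a * (g x).1 + b * (g x).2 = 0 :=
    linear_comb_eq_zero_of_hasDerivAt_smul hI hconn hg hne hx₀ hx (by simp only [a, b]; ring)
  have hcomponents (x : ℝ) (hx : x ∈ I) :
      HasDerivAt (fun t => (w t).1) (g x).1 x ∧ HasDerivAt (fun t => (w t).2) (g x).2 x :=
    ⟨(hw x hx).fst, (hw x hx).snd⟩
  have hderiv (x : ℝ) (hx : x ∈ I) :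
      HasDerivAt (fun t => a * (w t).1 + b * (w t).2) 0 x :=
    (((hcomponents x hx).1.const_mul a).add ((hcomponents x hx).2.const_mul b)).congr_deriv
      (hzero x hx)
  exact ⟨a, b, a * (w x₀).1 + b * (w x₀).2, hab, fun x hx =>
    hI.is_const_of_deriv_eq_zero hconn.isPreconnected
      (fun t ht => (hderiv t ht).differentiableAt.differentiableWithinAt)
      (fun t ht => (hderiv t ht).deriv) hx hx₀⟩

theorem exists_line_of_isAffineAt_cubicConnection {A B C D : ℝ × ℝ → ℝ} {Ψ : ℝ × ℝ → ℝ × ℝ}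
    {I : Set ℝ} (hI : IsOpen I) (hconn : I.OrdConnected) {c : ℝ → ℝ}
    (hc : ∀ x ∈ I, DifferentiableAt ℝ c x) (hc' : ∀ x ∈ I, DifferentiableAt ℝ (deriv c) x)
    (hode : ∀ x ∈ I, deriv (deriv c) x = A (x, c x) * deriv c x ^ 3 +
      3 * B (x, c x) * deriv c x ^ 2 + 3 * C (x, c x) * deriv c x + D (x, c x))
    (hΨ : ∀ x ∈ I, ContDiffAt ℝ 2 Ψ (x, c x))
    (haffine : ∀ x ∈ I, IsAffineAt (fun w => cubicConnection (A w, B w, C w, D w)) Ψ (x, c x))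
    (hjacobian : ∀ x ∈ I, jacobian Ψ (x, c x) ≠ 0) :
    ∃ a b k : ℝ, (a, b) ≠ ((0 : ℝ), (0 : ℝ)) ∧
      ∀ x ∈ I, a * (Ψ (x, c x)).1 + b * (Ψ (x, c x)).2 = k := by
  let r : ℝ → ℝ := fun t => C (t, c t) + 2 * B (t, c t) * deriv c t + A (t, c t) * deriv c t ^ 2
  have hgraph (x : ℝ) (hx : x ∈ I) : HasDerivAt (fun t => (t, c t)) (1, deriv c x) x :=
    (hasDerivAt_id x).prodMk (hc x hx).hasDerivAt
  have hvelocity (x : ℝ) (hx : x ∈ I) :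
      HasDerivAt (fun t => ((1, deriv c t) : ℝ × ℝ)) (0, deriv (deriv c) x) x :=
    (hasDerivAt_const x 1).prodMk (hc' x hx).hasDerivAt
  have hgeodesic (x : ℝ) (hx : x ∈ I) : ((0, deriv (deriv c) x) : ℝ × ℝ) +
      cubicConnection (A (x, c x), B (x, c x), C (x, c x), D (x, c x)) (1, deriv c x)
        (1, deriv c x) = r x • ((1, deriv c x) : ℝ × ℝ) := by
    rw [hode x hx]
    exact cubicConnection_graph _ _ _ _ _
  exact exists_line_of_hasDerivAt_smul hI hconn
    (fun x hx => ((hΨ x hx).differentiableAt two_ne_zero).hasFDerivAt.comp_hasDerivAt x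
      (hgraph x hx))
    (fun x hx => (haffine x hx).hasDerivAt_fderiv_apply
      (γ := fun t => (t, c t)) (v := fun t => (1, deriv c t))
      (((hΨ x hx).fderiv_right le_rfl).differentiableAt one_ne_zero)
      (hgraph x hx) (hvelocity x hx) (hgeodesic x hx))
    (fun x hx => fderiv_apply_ne_zero_of_jacobian_ne_zero (hjacobian x hx) (by simp))

/-- Sufficiency of the linearizability conditions: if `f` is cubic in `y'` with
real-analytic coefficients satisfying the stated PDEs, then locally there is a
real-analytic area-preserving point transformation `(χ, φ)` mapping graphs of
solutions of `y'' = f(x,y,y')` onto affine lines. -/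
theorem stmt11 (W : Set (ℝ × ℝ)) (hW : IsOpen W)
    (A B C D : ℝ × ℝ → ℝ)
    (hA : AnalyticOnNhd ℝ A W) (hB : AnalyticOnNhd ℝ B W)
    (hC : AnalyticOnNhd ℝ C W) (hD : AnalyticOnNhd ℝ D W)
    (h1 : ∀ z ∈ W, pdy D z - pdx C z = 2 * (B z * D z - C z ^ 2))
    (h2 : ∀ z ∈ W, pdy C z - pdx B z = A z * D z - B z * C z)
    (h3 : ∀ z ∈ W, pdy B z - pdx A z = 2 * (A z * C z - B z ^ 2))
    (f : ℝ × ℝ × ℝ → ℝ)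
    (hf : ∀ x y p : ℝ, f (x, y, p) =
      A (x, y) * p ^ 3 + 3 * B (x, y) * p ^ 2 + 3 * C (x, y) * p + D (x, y)) :
    ∀ z₀ ∈ W, ∃ U₀ : Set (ℝ × ℝ), IsOpen U₀ ∧ z₀ ∈ U₀ ∧ U₀ ⊆ W ∧
      ∃ χ φ : ℝ × ℝ → ℝ,
        AnalyticOnNhd ℝ χ U₀ ∧ AnalyticOnNhd ℝ φ U₀ ∧
        (∀ z ∈ U₀, pdx χ z * pdy φ z - pdy χ z * pdx φ z = 1) ∧
        ∀ I : Set ℝ, IsOpen I → I.OrdConnected →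
          ∀ c : ℝ → ℝ,
            (∀ x ∈ I, DifferentiableAt ℝ c x) →
            (∀ x ∈ I, DifferentiableAt ℝ (deriv c) x) →
            (∀ x ∈ I, deriv (deriv c) x = f (x, c x, deriv c x)) →
            (∀ x ∈ I, (x, c x) ∈ U₀) →
            ∃ a b k : ℝ, (a, b) ≠ ((0 : ℝ), (0 : ℝ)) ∧
              ∀ x ∈ I, a * χ (x, c x) + b * φ (x, c x) = k := by
  intro z₀ hz₀
  have hΓ : AnalyticAt ℝ (fun z => cubicConnection (A z, B z, C z, D z)) z₀ :=
    analyticAt_cubicConnection (hA z₀ hz₀) (hB z₀ hz₀) (hC z₀ hz₀) (hD z₀ hz₀)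
  have hflat : ∀ z ∈ W, IsFlatAt (fun z => cubicConnection (A z, B z, C z, D z)) z := fun z hz =>
    isFlatAt_cubicConnection (hA z hz).differentiableAt (hB z hz).differentiableAt
      (hC z hz).differentiableAt (hD z hz).differentiableAt (h1 z hz) (h2 z hz) (h3 z hz)
  obtain ⟨Ψ, hΨ⟩ := exists_isAffineAt_jacobian_eq_one hΓ
    (.of_forall fun _ => cubicConnection_comm _)
    (eventually_of_mem (hW.mem_nhds hz₀) hflat) (.of_forall fun _ => cubicConnection_trace _)
  obtain ⟨U₀, hU₀, hopen, hzU₀⟩ := eventually_nhds_iff.1 (hΨ.and (hW.mem_nhds hz₀))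
  refine ⟨U₀, hopen, hzU₀, fun z hz => (hU₀ z hz).2, fun z => (Ψ z).1, fun z => (Ψ z).2,
    fun z hz => analyticAt_fst.comp (hU₀ z hz).1.1, fun z hz => analyticAt_snd.comp (hU₀ z hz).1.1,
    fun z hz => ?_, fun I hI hconn c hc hc' hode hgraph => ?_⟩
  · rw [← jacobian_eq_pdx_mul_pdy_sub (hU₀ z hz).1.1.differentiableAt, (hU₀ z hz).1.2.2]
  · exact exists_line_of_isAffineAt_cubicConnection hI hconn hc hc'
      (fun x hx => (hode x hx).trans (hf _ _ _)) (fun x hx => (hU₀ _ (hgraph x hx)).1.1.contDiffAt)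
      (fun x hx => (hU₀ _ (hgraph x hx)).1.2.1)
      (fun x hx => (hU₀ _ (hgraph x hx)).1.2.2 ▸ one_ne_zero)
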